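/- Under the square-potential pinning measure P̃_{N,a,b} with density proportional to exp(−H(φ) + b∑_{x∈Λ_N} 1_{φ(x)∈[0,a]}), the probability of the hard-wall event Ω_N⁺ = {φ ≥ 0 on Λ_N} satisfies P̃_{N,a,b}(Ω_N⁺) ≥ (Z_N / Z̃_{N,a,b}) · ∑_{A ⊆ Λ_N} exp(J'|A|) · P_{A^c}(Ω_{A^c}⁺), where J' = log(e^b − 1) + log c + log(min(1/2, a)) and c = c(d) is the constant from the single-site Gaussian bound. -/

import Mathlib

open MeasureTheory Real Finset

noncomputable section

/-- The nearest neighbours of a point of `ℤ^d`. -/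
def nbrs (d : ℕ) (x : Fin d → ℤ) : Finset (Fin d → ℤ) :=
  (Finset.univ : Finset (Fin d × Bool)).image
    (fun p => Function.update x p.1 (x p.1 + if p.2 then 1 else -1))

/-- Outer boundary of a finite subset of `ℤ^d`. -/
def bdry (d : ℕ) (A : Finset (Fin d → ℤ)) : Finset (Fin d → ℤ) :=
  A.biUnion (nbrs d) \ A

/-- The Gaussian free field Hamiltonian
`H_A(φ) = (1/8d) ∑_{x,y ∈ A ∪ ∂A, |x-y| = 1} (φ x - φ y)²`. -/
def ham (d : ℕ) (A : Finset (Fin d → ℤ)) (φ : (Fin d → ℤ) → ℝ) : ℝ :=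
  (1 / (8 * d)) * ∑ x ∈ A ∪ bdry d A, ∑ y ∈ A ∪ bdry d A,
    if y ∈ nbrs d x then (φ x - φ y) ^ 2 else 0

/-- Extension of a field on `A` by zero boundary conditions. -/
def extz {d : ℕ} (A : Finset (Fin d → ℤ)) (ψ : A → ℝ) : (Fin d → ℤ) → ℝ :=
  fun x => if h : x ∈ A then ψ ⟨x, h⟩ else 0

/-- Unnormalized density of the zero-boundary GFF on `A`. -/
def gffDensity (d : ℕ) (A : Finset (Fin d → ℤ)) (ψ : A → ℝ) : ℝ :=
  Real.exp (-ham d A (extz A ψ))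

/-- Partition function of the zero-boundary GFF on `A`. -/
def gffZ (d : ℕ) (A : Finset (Fin d → ℤ)) : ℝ :=
  ∫ ψ : A → ℝ, gffDensity d A ψ

/-- The zero-boundary Gaussian free field measure on `A ⊂ ℤ^d`. -/
def gff (d : ℕ) (A : Finset (Fin d → ℤ)) : Measure (A → ℝ) :=
  (ENNReal.ofReal (gffZ d A))⁻¹ •
    volume.withDensity (fun ψ => ENNReal.ofReal (gffDensity d A ψ))

/-- The box `Λ_N = {-⌊N/2⌋, …, ⌊N/2⌋}^d`. -/
def box (d N : ℕ) : Finset (Fin d → ℤ) :=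
  Fintype.piFinset (fun _ => Finset.Icc (-(N / 2 : ℤ)) (N / 2 : ℤ))

/-- Unnormalized density of the square-well pinned field on `Λ_N`. -/
def pinDensity (d N : ℕ) (a b : ℝ) (ψ : box d N → ℝ) : ℝ :=
  Real.exp (-ham d (box d N) (extz (box d N) ψ) +
    b * ∑ x : box d N, (if ψ x ∈ Set.Icc 0 a then (1 : ℝ) else 0))

/-- Partition function of the pinned field. -/
def pinZ (d N : ℕ) (a b : ℝ) : ℝ := ∫ ψ : box d N → ℝ, pinDensity d N a b ψ

/-- The square-well pinning measure `P̃_{N,a,b}` on the box `Λ_N`. -/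
def pin (d N : ℕ) (a b : ℝ) : Measure (box d N → ℝ) :=
  (ENNReal.ofReal (pinZ d N a b))⁻¹ •
    volume.withDensity (fun ψ => ENNReal.ofReal (pinDensity d N a b ψ))

/-- The number of pinned points `ξ̃_N`. -/
def numPinned (d N : ℕ) (a : ℝ) (ψ : box d N → ℝ) : ℕ :=
  (Finset.univ.filter (fun x : box d N => ψ x ∈ Set.Icc 0 a)).card

/-- The hard wall event `Ω⁺_B` within the box, for fields on `Λ_N`: nonnegativity
at every point of `B`. -/
def wallOn (d N : ℕ) (B : Finset (Fin d → ℤ)) : Set (box d N → ℝ) :=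
  {ψ | ∀ x : box d N, (x : Fin d → ℤ) ∈ B → 0 ≤ ψ x}

/-- The hard-wall event for the zero-boundary GFF on `A`. -/
def wall {d : ℕ} (A : Finset (Fin d → ℤ)) : Set (A → ℝ) := {ψ | ∀ x, 0 ≤ ψ x}

end

section GaussAbstract

set_option linter.unusedSectionVars false

variable {V : Type*} [DecidableEq V]

/-- Quadratic form of the matrix `M` restricted to coordinates in `S`. -/
noncomputable def QF (M : V → V → ℝ) (S : Finset V) (φ : V → ℝ) : ℝ :=
  ∑ x ∈ S, ∑ y ∈ S, M x y * φ x * φ y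

/-- Good (M-matrix type) coefficient systems on `S`. -/
structure GoodM (K : ℝ) (S : Finset V) (M : V → V → ℝ) : Prop where
  symm : ∀ x y, M x y = M y x
  off : ∀ x ∈ S, ∀ y ∈ S, x ≠ y → M x y ≤ 0
  row : ∀ x ∈ S, 0 ≤ ∑ y ∈ S, M x y
  diag : ∀ x ∈ S, M x x ≤ 1 / 2
  bound : ∀ φ : V → ℝ, ∀ x ∈ S, φ x ^ 2 ≤ K * QF M S φ

/-- Schur complement with respect to the site `x`. -/
noncomputable def schur (M : V → V → ℝ) (x : V) : V → V → ℝ :=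
  fun y z => M y z - M y x * M x z / M x x

/-- Conditional mean at `x` given the values on `S`. -/
noncomputable def cmean (M : V → V → ℝ) (S : Finset V) (x : V) (φ : V → ℝ) : ℝ :=
  -(∑ y ∈ S, M x y * φ y) / M x x

lemma QF_congr (M : V → V → ℝ) (S : Finset V) {φ ψ : V → ℝ} (h : ∀ x ∈ S, φ x = ψ x) :
    QF M S φ = QF M S ψ := by
  unfold QF
  exact Finset.sum_congr rfl fun x hx => Finset.sum_congr rfl fun y hy => by
    rw [h x hx, h y hy]

lemma cmean_congr (M : V → V → ℝ) (S : Finset V) (x : V) {φ ψ : V → ℝ}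
    (h : ∀ x ∈ S, φ x = ψ x) : cmean M S x φ = cmean M S x ψ := by
  unfold cmean
  rw [Finset.sum_congr rfl fun y hy => by rw [h y hy]]

lemma QF_insert (M : V → V → ℝ) (hs : ∀ x y, M x y = M y x) (S : Finset V) (x : V)
    (hx : x ∉ S) (h0 : M x x ≠ 0) (φ : V → ℝ) :
    QF M (insert x S) φ = QF (schur M x) S φ + M x x * (φ x - cmean M S x φ) ^ 2 := by
  have h1 : QF M (insert x S) φ = M x x * φ x * φ x + φ x * (∑ y ∈ S, M x y * φ y)
      + (φ x * (∑ y ∈ S, M x y * φ y) + QF M S φ) := by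
    unfold QF
    rw [Finset.sum_insert hx, Finset.sum_insert hx]
    simp_rw [Finset.sum_insert hx]
    rw [Finset.sum_add_distrib, Finset.mul_sum]
    congr 2
    · refine Finset.sum_congr rfl fun y _ => by ring
    · refine Finset.sum_congr rfl fun y _ => by rw [hs y x]; ring
  have h2 : QF (schur M x) S φ = QF M S φ - (∑ y ∈ S, M x y * φ y) ^ 2 / M x x := by
    unfold QF schur
    rw [sq, Finset.sum_mul_sum, Finset.sum_div, ← Finset.sum_sub_distrib]
    refine Finset.sum_congr rfl fun y _ => ?_
    rw [Finset.sum_div, ← Finset.sum_sub_distrib]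
    refine Finset.sum_congr rfl fun z _ => ?_
    rw [hs y x]; ring
  rw [h1, h2, cmean]
  field_simp
  ring

lemma GoodM.diag_pos {K : ℝ} (hK : 0 < K) {S : Finset V} {M : V → V → ℝ} (h : GoodM K S M)
    {x : V} (hx : x ∈ S) : 1 / K ≤ M x x := by
  have := h.bound (fun y => if y = x then 1 else 0) x hx
  have h2 : QF M S (fun y => if y = x then 1 else 0) = M x x := by
    unfold QF
    rw [Finset.sum_eq_single x]
    · rw [Finset.sum_eq_single x] <;> simp_all
    · intro b _ hb; simp [hb]
    · simp [hx]
  rw [h2] at this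
  simp only [if_true, one_pow] at this
  rw [div_le_iff₀ hK]; linarith

lemma GoodM.mono {K : ℝ} {S T : Finset V} {M : V → V → ℝ} (h : GoodM K S M) (hT : T ⊆ S) :
    GoodM K T M where
  symm := h.symm
  off x hx y hy := h.off x (hT hx) y (hT hy)
  row x hx := by
    refine (h.row x (hT hx)).trans ?_
    rw [← Finset.sum_sdiff hT]
    have : ∑ y ∈ S \ T, M x y ≤ 0 := Finset.sum_nonpos fun y hy => by
      rw [Finset.mem_sdiff] at hy
      exact h.off x (hT hx) y hy.1 (by rintro rfl; exact hy.2 hx)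
    linarith
  diag x hx := h.diag x (hT hx)
  bound φ x hx := by
    have := h.bound (fun y => if y ∈ T then φ y else 0) x (hT hx)
    simp only [hx, if_true] at this
    refine this.trans_eq ?_
    congr 1
    unfold QF
    rw [← Finset.sum_subset hT]
    · refine Finset.sum_congr rfl fun y hy => ?_
      rw [← Finset.sum_subset hT]
      · exact Finset.sum_congr rfl fun z hz => by simp [hy, hz]
      · intro z _ hz; simp [hz]
    · intro z _ hz; simp [hz]

lemma GoodM.schur {K : ℝ} (hK : 0 < K) {S : Finset V} {M : V → V → ℝ} {x : V} (hx : x ∉ S)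
    (h : GoodM K (insert x S) M) : GoodM K S (schur M x) := by
  have hxx := h.diag_pos hK (Finset.mem_insert_self x S)
  have hpos : 0 < M x x := lt_of_lt_of_le (by positivity) hxx
  have hxS : ∀ y ∈ S, M x y ≤ 0 := fun y hy =>
    h.off x (by simp) y (by simp [hy]) (by rintro rfl; exact hx hy)
  have hSx : ∀ y ∈ S, M y x ≤ 0 := fun y hy => by rw [h.symm]; exact hxS y hy
  refine ⟨?_, ?_, ?_, ?_, ?_⟩
  · intro y z
    simp only [_root_.schur]
    rw [h.symm y z, h.symm y x, h.symm z x]; ring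
  · intro y hy z hz hyz
    simp only [_root_.schur]
    have h1 := h.off y (by simp [hy]) z (by simp [hz]) hyz
    have : 0 ≤ M y x * M x z / M x x :=
      div_nonneg (mul_nonneg_of_nonpos_of_nonpos (hSx y hy) (hxS z hz)) hpos.le
    linarith
  · intro y hy
    simp only [_root_.schur]
    rw [Finset.sum_sub_distrib, ← Finset.sum_div, ← Finset.mul_sum]
    have h1 := h.row y (by simp [hy])
    have h2 := h.row x (by simp)
    rw [Finset.sum_insert hx] at h1 h2
    have h3 : 0 ≤ (-M y x) * (M x x + ∑ i ∈ S, M x i) / M x x :=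
      div_nonneg (mul_nonneg (by linarith [hSx y hy]) h2) hpos.le
    have h4 : (-M y x) * (M x x + ∑ i ∈ S, M x i) / M x x =
      -M y x - M y x * (∑ i ∈ S, M x i) / M x x := by field_simp; ring
    linarith
  · intro y hy
    simp only [_root_.schur]
    have h1 := h.diag y (by simp [hy])
    have : 0 ≤ M y x * M x y / M x x :=
      div_nonneg (mul_nonneg_of_nonpos_of_nonpos (hSx y hy) (hxS y hy)) hpos.le
    linarith
  · intro φ y hy
    have hne : ∀ z ∈ S, z ≠ x := by rintro z hz rfl; exact hx hz
    have h1 := h.bound (Function.update φ x (cmean M S x φ)) y (by simp [hy])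
    rw [QF_insert M h.symm S x hx hpos.ne', Function.update_self,
      Function.update_of_ne (hne y hy),
      cmean_congr M S x (φ := Function.update φ x (cmean M S x φ)) (ψ := φ) (fun z hz => Function.update_of_ne (hne z hz) _ _),
      QF_congr _ S (φ := Function.update φ x (cmean M S x φ)) (ψ := φ) (fun z hz => Function.update_of_ne (hne z hz) _ _)] at h1
    simpa using h1

lemma GoodM.cmean_nonneg {K : ℝ} (hK : 0 < K) {S : Finset V} {M : V → V → ℝ} {x : V} (hx : x ∉ S)
    (h : GoodM K (insert x S) M) {φ : V → ℝ} (hφ : ∀ y ∈ S, 0 ≤ φ y) : 0 ≤ cmean M S x φ := by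
  have hxx := h.diag_pos hK (Finset.mem_insert_self x S)
  have hpos : 0 < M x x := lt_of_lt_of_le (by positivity) hxx
  refine div_nonneg (neg_nonneg.2 (Finset.sum_nonpos fun y hy => ?_)) hpos.le
  exact mul_nonpos_of_nonpos_of_nonneg (h.off x (by simp) y (by simp [hy])
    (by rintro rfl; exact hx hy)) (hφ y hy)

lemma GoodM.cmean_le {K : ℝ} (hK : 0 < K) {S : Finset V} {M : V → V → ℝ} {x : V} (hx : x ∉ S)
    (h : GoodM K (insert x S) M) {φ : V → ℝ} {a : ℝ} (ha : 0 ≤ a) (hφ : ∀ y ∈ S, φ y ≤ a) :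
    cmean M S x φ ≤ a := by
  have hxx := h.diag_pos hK (Finset.mem_insert_self x S)
  have hpos : 0 < M x x := lt_of_lt_of_le (by positivity) hxx
  unfold cmean
  rw [div_le_iff₀ hpos]
  have h2 := h.row x (by simp)
  rw [Finset.sum_insert hx] at h2
  have : ∑ y ∈ S, M x y * a ≤ ∑ y ∈ S, M x y * φ y := Finset.sum_le_sum fun y hy =>
    mul_le_mul_of_nonpos_left (hφ y hy) (h.off x (by simp) y (by simp [hy])
    (by rintro rfl; exact hx hy))
  rw [← Finset.sum_mul] at this
  nlinarith

/-- Harmonic extension. -/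
lemma harmonic_extension {K : ℝ} (hK : 0 < K) (A B : Finset V) (hAB : Disjoint A B) :
    ∀ M : V → V → ℝ, GoodM K (A ∪ B) M →
    ∃ MA : V → V → ℝ, GoodM K A MA ∧ ∃ h : (V → ℝ) → V → ℝ,
      (∀ φ ψ, (∀ x ∈ A, φ x = ψ x) → h φ = h ψ) ∧
      (∀ φ, ∀ x, x ∉ B → h φ x = 0) ∧
      (∀ φ, (∀ x ∈ A, 0 ≤ φ x) → ∀ x, 0 ≤ h φ x) ∧
      ∀ φ, QF M (A ∪ B) (φ + h φ) = QF M B φ + QF MA A φ := by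
  induction B using Finset.induction with
  | empty =>
    intro M hM
    rw [Finset.union_empty] at *
    refine ⟨M, hM, fun _ => 0, by simp, by simp, by simp, fun φ => by simp [QF]⟩
  | insert x B hxB ih =>
    intro M hM
    rw [Finset.union_insert] at *
    have hxA : x ∉ A := fun h => Finset.disjoint_left.1 hAB h (by simp)
    have hxAB : x ∉ A ∪ B := by simp [hxA, hxB]
    have hAB' : Disjoint A B := hAB.mono_right (Finset.subset_insert x B)
    have hxx := hM.diag_pos hK (Finset.mem_insert_self x _)
    have hpos : 0 < M x x := lt_of_lt_of_le (by positivity) hxx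
    obtain ⟨MA, hMA, h, hdep, hsupp, hnn, hQ⟩ := ih hAB' (schur M x) (hM.schur hK hxAB)
    let cut : (V → ℝ) → V → ℝ := fun φ y => if y ∈ A then φ y else 0
    refine ⟨MA, hMA, fun φ => Function.update (h φ) x (cmean M (A ∪ B) x (cut φ + h φ)),
      ?_, ?_, ?_, ?_⟩
    · intro φ ψ hφ
      have : cut φ = cut ψ := by
        funext y; simp only [cut]; split_ifs with hy
        · exact hφ y hy
        · rfl
      simp only [this, hdep φ ψ hφ]
    · intro φ y hy
      simp only [Finset.mem_insert, not_or] at hy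
      simp only
      rw [Function.update_of_ne hy.1]
      exact hsupp φ y hy.2
    · intro φ hφ y
      by_cases hyx : y = x
      · subst hyx
        simp only [Function.update_self]
        refine hM.cmean_nonneg hK hxAB fun z _ => ?_
        have := hnn φ hφ z
        simp only [Pi.add_apply, cut]
        split_ifs with hz
        · linarith [hφ z hz]
        · linarith
      · simp only [Function.update_of_ne hyx]
        exact hnn φ hφ y
    · intro φ
      have hne : ∀ z ∈ A ∪ B, z ≠ x := by rintro z hz rfl; exact hxAB hz
      set g := Function.update (h φ) x (cmean M (A ∪ B) x (cut φ + h φ)) with hg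
      have hgz : ∀ z ∈ A ∪ B, (φ + g) z = (φ + h φ) z := fun z hz => by
        simp [hg, Function.update_of_ne (hne z hz)]
      rw [QF_insert M hM.symm _ x hxAB hpos.ne', QF_insert M hM.symm _ x hxB hpos.ne',
        QF_congr _ _ hgz, hQ, cmean_congr _ _ _ hgz]
      have : (φ + g) x = φ x + cmean M (A ∪ B) x (cut φ + h φ) := by simp [hg]
      have h3 : cmean M (A ∪ B) x (φ + h φ) =
          cmean M B x φ + cmean M (A ∪ B) x (cut φ + h φ) := by
        unfold cmean
        rw [← add_div, ← neg_add]
        congr 2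
        simp only [Pi.add_apply, mul_add, Finset.sum_add_distrib]
        rw [Finset.sum_union hAB']
        have : ∑ y ∈ A ∪ B, M x y * cut φ y = ∑ y ∈ A, M x y * φ y := by
          rw [Finset.sum_union hAB']
          rw [Finset.sum_congr rfl (g := fun y => M x y * φ y) fun y hy => by simp [cut, hy]]
          rw [Finset.sum_eq_zero (s := B), add_zero]
          intro y hy
          have : y ∉ A := fun h => Finset.disjoint_left.1 hAB' h hy
          simp [cut, this]
        rw [this]; ring
      rw [this, h3]
      ring

end GaussAbstract

section GaussMeasure

set_option linter.unusedSectionVars false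

variable {V : Type*} [DecidableEq V]

/-- Gaussian weight. -/
noncomputable def EW (M : V → V → ℝ) (S : Finset V) (φ : V → ℝ) : ENNReal :=
  ENNReal.ofReal (Real.exp (-QF M S φ))

/-- Fields in `[0,a]` on `S`. -/
def boxSet (a : ℝ) (S : Finset V) : Set (V → ℝ) := {φ | ∀ x ∈ S, φ x ∈ Set.Icc 0 a}

/-- Fields that are nonnegative on `S`. -/
def wallSet (S : Finset V) : Set (V → ℝ) := {φ | ∀ x ∈ S, 0 ≤ φ x}

lemma measurable_QF (M : V → V → ℝ) (S : Finset V) : Measurable (QF M S) := by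
  unfold QF; fun_prop

lemma measurable_EW (M : V → V → ℝ) (S : Finset V) : Measurable (EW M S) := by
  unfold EW
  exact (Real.measurable_exp.comp (measurable_QF M S).neg).ennreal_ofReal

lemma measurableSet_boxSet (a : ℝ) (S : Finset V) : MeasurableSet (boxSet a S) := by
  have : boxSet a S = ⋂ x ∈ S, (fun φ : V → ℝ => φ x) ⁻¹' Set.Icc 0 a := by
    ext; simp [boxSet]
  rw [this]
  exact Finset.measurableSet_biInter _ fun x _ => measurable_pi_apply x measurableSet_Icc

lemma measurableSet_wallSet (S : Finset V) : MeasurableSet (wallSet S) := by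
  have : wallSet S = ⋂ x ∈ S, (fun φ : V → ℝ => φ x) ⁻¹' Set.Ici 0 := by
    ext; simp [wallSet]
  rw [this]
  exact Finset.measurableSet_biInter _ fun x _ => measurable_pi_apply x measurableSet_Ici

lemma lintegral_gauss {α : ℝ} (hα : 0 < α) (m : ℝ) :
    ∫⁻ t : ℝ, ENNReal.ofReal (Real.exp (-(α * (t - m) ^ 2))) = ENNReal.ofReal (√(π / α)) := by
  have h1 := lintegral_sub_right_eq_self (μ := (volume : Measure ℝ))
    (fun t : ℝ => ENNReal.ofReal (Real.exp (-(α * t ^ 2)))) m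
  rw [h1, ← integral_gaussian α]
  simp_rw [← neg_mul]
  rw [ofReal_integral_eq_lintegral_ofReal (integrable_exp_neg_mul_sq hα)]
  exact Filter.Eventually.of_forall fun _ => (Real.exp_pos _).le

/-- The single-site constant. -/
noncomputable def ssc (K : ℝ) : ℝ := Real.exp (-1 / 8) / √(K * π)

lemma ssc_pos {K : ℝ} (hK : 0 < K) : 0 < ssc K := by
  unfold ssc; positivity

lemma single_site {K α a m : ℝ} (hK : 0 < K) (hα : 1 / K ≤ α) (hα2 : α ≤ 1 / 2) (ha : 0 < a)
    (hm0 : 0 ≤ m) (hma : m ≤ a) :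
    ENNReal.ofReal (ssc K * min (1 / 2) a) * ENNReal.ofReal (√(π / α)) ≤
      ∫⁻ t in Set.Icc 0 a, ENNReal.ofReal (Real.exp (-(α * (t - m) ^ 2))) := by
  have hα0 : 0 < α := lt_of_lt_of_le (by positivity) hα
  obtain ⟨l, u, hl0, hua, hlen, hl, hu⟩ : ∃ l u : ℝ, 0 ≤ l ∧ u ≤ a ∧ min (1/2) a ≤ u - l ∧
      m - 1/2 ≤ l ∧ u ≤ m + 1/2 := by
    by_cases h : m ≤ 1/2
    · refine ⟨0, min (1/2) a, le_rfl, min_le_right _ _, by simp, by linarith, ?_⟩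
      have := min_le_left (1/2) a
      linarith
    · refine ⟨m - 1/2, m, by linarith, hma, ?_, le_rfl, by linarith⟩
      have := min_le_left (1/2) a
      linarith
  have hsub : Set.Icc l u ⊆ Set.Icc 0 a := Set.Icc_subset_Icc hl0 hua
  calc _ ≤ ENNReal.ofReal (Real.exp (-1/8)) * ENNReal.ofReal (u - l) := by
        rw [← ENNReal.ofReal_mul (by have := ssc_pos hK; positivity),
          ← ENNReal.ofReal_mul (by positivity)]
        apply ENNReal.ofReal_le_ofReal
        have h1 : √(π / α) ≤ √(K * π) := by
          apply Real.sqrt_le_sqrt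
          rw [div_le_iff₀ hα0]
          rw [div_le_iff₀ hK] at hα
          nlinarith [Real.pi_pos]
        have h2 : 0 < √(K * π) := by positivity
        have h3 : 0 < min (1/2) a := by positivity
        unfold ssc
        calc _ = Real.exp (-1/8) * (min (1/2) a * (√(π / α) / √(K * π))) := by ring
          _ ≤ Real.exp (-1/8) * (min (1/2) a * 1) := by
            gcongr
            rwa [div_le_one h2]
          _ ≤ _ := by gcongr; linarith
    _ = ∫⁻ t in Set.Icc l u, ENNReal.ofReal (Real.exp (-1/8)) := by simp
    _ ≤ ∫⁻ t in Set.Icc l u, ENNReal.ofReal (Real.exp (-(α * (t - m) ^ 2))) := by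
        apply setLIntegral_mono' measurableSet_Icc
        intro t ht
        apply ENNReal.ofReal_le_ofReal
        apply Real.exp_le_exp.2
        have h1 : (t - m) ^ 2 ≤ 1/4 := by
          have := ht.1; have := ht.2
          nlinarith
        nlinarith [sq_nonneg (t - m)]
    _ ≤ _ := lintegral_mono_set hsub

lemma EW_insert {M : V → V → ℝ} (hs : ∀ x y, M x y = M y x) {S : Finset V} {x : V}
    (hx : x ∉ S) (h0 : M x x ≠ 0) (φ : V → ℝ) (t : ℝ) :
    EW M (insert x S) (Function.update φ x t) =
      EW (schur M x) S φ * ENNReal.ofReal (Real.exp (-(M x x * (t - cmean M S x φ) ^ 2))) := by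
  have hne : ∀ z ∈ S, z ≠ x := by rintro z hz rfl; exact hx hz
  unfold EW
  rw [QF_insert M hs S x hx h0, Function.update_self,
      cmean_congr M S x (φ := Function.update φ x t) (ψ := φ)
        (fun z hz => Function.update_of_ne (hne z hz) _ _),
      QF_congr _ S (φ := Function.update φ x t) (ψ := φ)
        (fun z hz => Function.update_of_ne (hne z hz) _ _),
      ← ENNReal.ofReal_mul (Real.exp_pos _).le, ← Real.exp_add, neg_add]

/-- Gaussian integral over the coordinates in `S`. -/
noncomputable def LM (S : Finset V) (f : (V → ℝ) → ENNReal) : (V → ℝ) → ENNReal :=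
  lmarginal (fun _ => (volume : Measure ℝ)) S f

lemma LM_insert {S : Finset V} {x : V} (hx : x ∉ S) {f : (V → ℝ) → ENNReal} (hf : Measurable f) :
    LM (insert x S) f = LM S (fun φ => ∫⁻ t, f (Function.update φ x t)) :=
  lmarginal_insert' f hf hx

lemma LM_mono {S : Finset V} {f g : (V → ℝ) → ENNReal} (h : ∀ φ, f φ ≤ g φ) (φ : V → ℝ) :
    LM S f φ ≤ LM S g φ := lmarginal_mono (fun φ => h φ) φ

lemma LM_mul_const {S : Finset V} {f : (V → ℝ) → ENNReal} (hf : Measurable f) (c : ENNReal)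
    (φ : V → ℝ) : LM S (fun φ => f φ * c) φ = LM S f φ * c := by
  unfold LM lmarginal
  rw [lintegral_mul_const]
  exact hf.comp measurable_updateFinset

lemma LM_EW_insert {K : ℝ} (hK : 0 < K) {S : Finset V} {M : V → V → ℝ} {x : V} (hx : x ∉ S)
    (h : GoodM K (insert x S) M) (φ : V → ℝ) :
    LM (insert x S) (EW M (insert x S)) φ =
      LM S (EW (schur M x) S) φ * ENNReal.ofReal (√(π / M x x)) := by
  have hxx := h.diag_pos hK (Finset.mem_insert_self x S)
  have hpos : 0 < M x x := lt_of_lt_of_le (by positivity) hxx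
  rw [LM_insert hx (measurable_EW _ _), ← LM_mul_const (measurable_EW _ _)]
  congr 1
  funext ψ
  simp_rw [EW_insert h.symm hx hpos.ne']
  rw [lintegral_const_mul _ (by fun_prop), lintegral_gauss hpos]

lemma LM_EW_pos_fin {K : ℝ} (hK : 0 < K) (S : Finset V) :
    ∀ M : V → V → ℝ, GoodM K S M → ∀ φ, LM S (EW M S) φ ≠ 0 ∧ LM S (EW M S) φ ≠ ⊤ := by
  induction S using Finset.induction with
  | empty => intro M _ φ; simp [LM, EW, QF]
  | insert x S hx ih =>
    intro M h φ
    have hxx := h.diag_pos hK (Finset.mem_insert_self x S)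
    have hpos : 0 < M x x := lt_of_lt_of_le (by positivity) hxx
    rw [LM_EW_insert hK hx h]
    obtain ⟨h1, h2⟩ := ih _ (h.schur hK hx) φ
    refine ⟨mul_ne_zero h1 ?_, ENNReal.mul_ne_top h2 ENNReal.ofReal_ne_top⟩
    rw [← pos_iff_ne_zero, ENNReal.ofReal_pos]
    have := Real.pi_pos
    positivity

lemma box_lower {K a : ℝ} (hK : 0 < K) (ha : 0 < a) (S : Finset V) :
    ∀ M : V → V → ℝ, GoodM K S M → ∀ φ,
      ENNReal.ofReal (ssc K * min (1 / 2) a) ^ S.card * LM S (EW M S) φ ≤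
        LM S ((boxSet a S).indicator (EW M S)) φ := by
  induction S using Finset.induction with
  | empty => intro M _ φ; simp [LM, EW, QF, boxSet]
  | insert x S hx ih =>
    intro M h φ
    have hxx := h.diag_pos hK (Finset.mem_insert_self x S)
    have hpos : 0 < M x x := lt_of_lt_of_le (by positivity) hxx
    have hne : ∀ z ∈ S, z ≠ x := by rintro z hz rfl; exact hx hz
    have hI := ih _ (h.schur hK hx) φ
    set c := ENNReal.ofReal (ssc K * min (1 / 2) a) with hc
    set g := ENNReal.ofReal (√(π / M x x)) with hg
    rw [LM_EW_insert hK hx h, Finset.card_insert_of_notMem hx,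
      LM_insert hx ((measurable_EW _ _).indicator (measurableSet_boxSet _ _))]
    calc c ^ (S.card + 1) * (LM S (EW (schur M x) S) φ * g)
        = (c ^ S.card * LM S (EW (schur M x) S) φ) * (c * g) := by ring
      _ ≤ LM S ((boxSet a S).indicator (EW (schur M x) S)) φ * (c * g) := by gcongr
      _ = LM S (fun ψ => (boxSet a S).indicator (EW (schur M x) S) ψ * (c * g)) φ := by
          rw [LM_mul_const ((measurable_EW _ _).indicator (measurableSet_boxSet _ _))]
      _ ≤ _ := by
          apply LM_mono
          intro ψ
          by_cases hψ : ψ ∈ boxSet a S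
          · rw [Set.indicator_of_mem hψ]
            have hss := single_site (m := cmean M S x ψ) hK hxx (h.diag x (by simp)) ha
              (h.cmean_nonneg hK hx fun y hy => (hψ y hy).1)
              (h.cmean_le hK hx ha.le fun y hy => (hψ y hy).2)
            calc _ ≤ EW (schur M x) S ψ * _ := mul_le_mul_right hss _
              _ = ∫⁻ t in Set.Icc 0 a, EW M (insert x S) (Function.update ψ x t) := by
                  simp_rw [EW_insert h.symm hx hpos.ne']
                  rw [lintegral_const_mul _ (by fun_prop)]
              _ = ∫⁻ t, (Set.Icc 0 a).indicator
                    (fun t => EW M (insert x S) (Function.update ψ x t)) t := by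
                  rw [lintegral_indicator measurableSet_Icc]
              _ ≤ _ := by
                  apply lintegral_mono
                  intro t
                  by_cases ht : t ∈ Set.Icc 0 a
                  · have : Function.update ψ x t ∈ boxSet a (insert x S) := by
                      intro y hy
                      rcases Finset.mem_insert.1 hy with rfl | hy
                      · simpa using ht
                      · rw [Function.update_of_ne (hne y hy)]; exact hψ y hy
                    simp only
                    rw [Set.indicator_of_mem ht, Set.indicator_of_mem this]
                  · rw [Set.indicator_of_notMem ht]; exact zero_le
          · rw [Set.indicator_of_notMem hψ, zero_mul]; exact zero_le

/-- Main estimate for each pinned set. -/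
lemma main_set {K a : ℝ} (hK : 0 < K) (ha : 0 < a) (A B : Finset V) (hAB : Disjoint A B)
    (M : V → V → ℝ) (hM : GoodM K (A ∪ B) M) (φ : V → ℝ) :
    ENNReal.ofReal (ssc K * min (1 / 2) a) ^ A.card *
        LM B ((wallSet B).indicator (EW M B)) φ * LM (A ∪ B) (EW M (A ∪ B)) φ ≤
      LM (A ∪ B) ((wallSet B ∩ boxSet a A).indicator (EW M (A ∪ B))) φ * LM B (EW M B) φ := by
  obtain ⟨MA, hMA, h, hdep, hsupp, hnn, hQ⟩ := harmonic_extension hK A B hAB M hM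
  have hBA : ∀ x ∈ B, x ∉ A := fun x hx h => Finset.disjoint_left.1 hAB h hx
  have hABn : ∀ x ∈ A, x ∉ B := fun x hx h => Finset.disjoint_left.1 hAB hx h
  have shift : ∀ (f : (V → ℝ) → ENNReal) (ψ : V → ℝ),
      LM B f ψ = LM B (fun χ => f (χ + h χ)) ψ := by
    intro f ψ
    unfold LM lmarginal
    have := lintegral_add_right_eq_self (μ := Measure.pi fun _ : B => (volume : Measure ℝ))
      (fun y => f (Function.updateFinset ψ B y)) (fun x : B => h ψ x)
    rw [← this]
    apply lintegral_congr
    intro y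
    have h1 : h (Function.updateFinset ψ B y) = h ψ := by
      apply hdep
      intro x hx
      simp [Function.updateFinset, hABn x hx]
    simp only [h1]
    congr 1
    funext x
    by_cases hx : x ∈ B
    · simp [Function.updateFinset, hx]
    · simp [Function.updateFinset, hx, hsupp ψ x hx]
  have hEW : ∀ χ, EW M (A ∪ B) (χ + h χ) = EW M B χ * EW MA A χ := by
    intro χ
    unfold EW
    rw [hQ, neg_add, Real.exp_add, ENNReal.ofReal_mul (Real.exp_pos _).le]
  have indep : ∀ (f : (V → ℝ) → ENNReal), (∀ χ χ', (∀ x ∈ B, χ x = χ' x) → f χ = f χ') →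
      ∀ ψ, LM B f ψ = LM B f φ := by
    intro f hf ψ
    unfold LM lmarginal
    apply lintegral_congr
    intro y
    apply hf
    intro x hx
    simp [Function.updateFinset, hx]
  have hEWB : ∀ χ χ' : V → ℝ, (∀ x ∈ B, χ x = χ' x) → EW M B χ = EW M B χ' := by
    intro χ χ' hχ; unfold EW; rw [QF_congr _ _ hχ]
  have hWB : ∀ χ χ' : V → ℝ, (∀ x ∈ B, χ x = χ' x) →
      (wallSet B).indicator (EW M B) χ = (wallSet B).indicator (EW M B) χ' := by
    intro χ χ' hχ
    have : χ ∈ wallSet B ↔ χ' ∈ wallSet B := by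
      unfold wallSet
      exact forall₂_congr fun x hx => by rw [hχ x hx]
    by_cases h1 : χ ∈ wallSet B
    · rw [Set.indicator_of_mem h1, Set.indicator_of_mem (this.1 h1), hEWB _ _ hχ]
    · rw [Set.indicator_of_notMem h1, Set.indicator_of_notMem (fun h => h1 (this.2 h))]
  have pull : ∀ (f g : (V → ℝ) → ENNReal), Measurable f →
      (∀ χ χ', (∀ x ∈ A, χ x = χ' x) → g χ = g χ') →
      ∀ ψ, LM B (fun χ => f χ * g χ) ψ = LM B f ψ * g ψ := by
    intro f g hf hg ψ
    rw [← LM_mul_const hf]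
    unfold LM lmarginal
    apply lintegral_congr
    intro y
    simp only
    congr 1
    apply hg
    intro x hx
    simp [Function.updateFinset, hABn x hx]
  have hEWA : ∀ χ χ' : V → ℝ, (∀ x ∈ A, χ x = χ' x) → EW MA A χ = EW MA A χ' := by
    intro χ χ' hχ; unfold EW; rw [QF_congr _ _ hχ]
  set c := ENNReal.ofReal (ssc K * min (1 / 2) a) with hc
  set W := LM B ((wallSet B).indicator (EW M B)) φ with hW
  set Z := LM B (EW M B) φ with hZ
  have hmW := (measurable_EW M B).indicator (measurableSet_wallSet B)
  have hunion : ∀ f : (V → ℝ) → ENNReal, Measurable f → LM (A ∪ B) f = LM A (LM B f) :=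
    fun f hf => lmarginal_union _ f hf hAB
  have e1 : LM (A ∪ B) (EW M (A ∪ B)) φ = LM A (EW MA A) φ * Z := by
    rw [hunion _ (measurable_EW _ _), ← LM_mul_const (measurable_EW _ _)]
    congr 1
    funext ψ
    rw [shift]
    simp_rw [hEW]
    rw [pull _ _ (measurable_EW _ _) hEWA, indep _ hEWB, mul_comm]
  have hmb := (measurable_EW MA A).indicator (measurableSet_boxSet a A)
  have e2 : LM A ((boxSet a A).indicator (EW MA A)) φ * W ≤
      LM (A ∪ B) ((wallSet B ∩ boxSet a A).indicator (EW M (A ∪ B))) φ := by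
    rw [hunion _ ((measurable_EW _ _).indicator
      ((measurableSet_wallSet B).inter (measurableSet_boxSet a A))), ← LM_mul_const hmb]
    apply LM_mono
    intro ψ
    by_cases hψ : ψ ∈ boxSet a A
    · rw [Set.indicator_of_mem hψ, shift, hW, ← indep _ hWB ψ, mul_comm, ← pull _ _ hmW hEWA]
      unfold LM lmarginal
      apply lintegral_mono
      intro y
      set χ := Function.updateFinset ψ B y with hχ
      have hχA : ∀ x ∈ A, χ x = ψ x := fun x hx => by
        simp [hχ, Function.updateFinset, hABn x hx]
      by_cases h1 : χ ∈ wallSet B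
      · have h2 : χ + h χ ∈ wallSet B ∩ boxSet a A := by
          have hn : ∀ x, 0 ≤ h χ x := hnn χ fun x hx => by rw [hχA x hx]; exact (hψ x hx).1
          refine ⟨fun x hx => add_nonneg (h1 x hx) (hn x), fun x hx => ?_⟩
          simp only [Pi.add_apply, hsupp χ x (hABn x hx), add_zero, hχA x hx]
          exact hψ x hx
        simp only
        rw [Set.indicator_of_mem h1, Set.indicator_of_mem h2, hEW]
      · simp only
        rw [Set.indicator_of_notMem h1, zero_mul]; exact zero_le
    · rw [Set.indicator_of_notMem hψ, zero_mul]; exact zero_le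
  rw [e1]
  calc c ^ A.card * W * (LM A (EW MA A) φ * Z)
      = (c ^ A.card * LM A (EW MA A) φ) * W * Z := by ring
    _ ≤ LM A ((boxSet a A).indicator (EW MA A)) φ * W * Z := by
        gcongr
        exact box_lower hK ha A MA hMA φ
    _ ≤ _ := by gcongr

end GaussMeasure

section Flow

/-- The explicit unit flow on `ℕ³` (Polya urn flow). -/
noncomputable def flowT (i j k : ℕ) : ℝ :=
  2 * (i : ℝ) / (((i : ℝ) + j + k) * ((i : ℝ) + j + k + 1) * ((i : ℝ) + j + k + 2))

lemma sum_parts (T u : ℕ → ℝ) (n : ℕ) (hT : T 0 = 0) (hu : u n = 0) :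
    ∑ i ∈ range n, T (i + 1) * (u i - u (i + 1)) = ∑ i ∈ range n, (T (i + 1) - T i) * u i := by
  have : ∑ i ∈ range n, (T (i + 1) * u (i + 1) - T i * u i) = 0 := by
    rw [Finset.sum_range_sub (fun i => T i * u i)]; simp [hT, hu]
  rw [← sub_eq_zero, ← Finset.sum_sub_distrib, ← neg_eq_zero, ← Finset.sum_neg_distrib, ← this]
  exact Finset.sum_congr rfl fun i _ => by ring

lemma flow_div (i j k : ℕ) :
    (flowT (i + 1) j k - flowT i j k) + (flowT (j + 1) i k - flowT j i k) +
      (flowT (k + 1) i j - flowT k i j) = if i = 0 ∧ j = 0 ∧ k = 0 then 1 else 0 := by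
  unfold flowT
  split_ifs with h
  · obtain ⟨rfl, rfl, rfl⟩ := h
    norm_num
  · have hn : (0 : ℝ) < (i : ℝ) + j + k := by
      have : 0 < i + j + k := by omega
      exact_mod_cast this
    push_cast
    set n : ℝ := (i : ℝ) + j + k with hn'
    have e1 : (i : ℝ) + 1 + j + k = n + 1 := by rw [hn']; ring
    have e2 : (j : ℝ) + 1 + i + k = n + 1 := by rw [hn']; ring
    have e3 : (k : ℝ) + 1 + i + j = n + 1 := by rw [hn']; ring
    have e4 : (j : ℝ) + i + k = n := by rw [hn']; ring
    have e5 : (k : ℝ) + i + j = n := by rw [hn']; ring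
    rw [e1, e2, e3, e4, e5]
    have h1 : n + 1 ≠ 0 := by positivity
    have h2 : n + 1 + 1 ≠ 0 := by positivity
    have h3 : n + 1 + 2 ≠ 0 := by positivity
    have h4 : n + 2 ≠ 0 := by positivity
    have hk : (k : ℝ) = n - i - j := by rw [hn']; ring
    rw [hk]
    field_simp
    ring

lemma flow_sq (i j k : ℕ) : flowT (i + 1) j k ^ 2 + flowT (j + 1) i k ^ 2 + flowT (k + 1) i j ^ 2
    ≤ 4 * (1 / (((i + j + k : ℕ) : ℝ) + 1) ^ 3 - 1 / (((i + j + (k + 1) : ℕ) : ℝ) + 1) ^ 3) := by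
  unfold flowT
  push_cast
  have hi : (0 : ℝ) ≤ i := by positivity
  have hj : (0 : ℝ) ≤ j := by positivity
  have hk : (0 : ℝ) ≤ k := by positivity
  generalize (i : ℝ) = x at *
  generalize (j : ℝ) = y at *
  generalize (k : ℝ) = z at *
  obtain ⟨n, hn⟩ : ∃ n, n = x + y + z := ⟨_, rfl⟩
  have hn0 : 0 ≤ n := by rw [hn]; positivity
  have e1 : x + 1 + y + z = n + 1 := by rw [hn]; ring
  have e2 : y + 1 + x + z = n + 1 := by rw [hn]; ring
  have e3 : z + 1 + x + y = n + 1 := by rw [hn]; ring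
  have e4 : x + y + (z + 1) = n + 1 := by rw [hn]; ring
  rw [e1, e2, e3, e4, ← hn]
  have hsq : (x + 1) ^ 2 + (y + 1) ^ 2 + (z + 1) ^ 2 ≤ (n + 3) ^ 2 := by
    rw [hn]; nlinarith [mul_nonneg hi hj, mul_nonneg hi hk, mul_nonneg hj hk]
  have l1 : (2 * (x + 1) / ((n + 1) * (n + 1 + 1) * (n + 1 + 2))) ^ 2 +
      (2 * (y + 1) / ((n + 1) * (n + 1 + 1) * (n + 1 + 2))) ^ 2 +
      (2 * (z + 1) / ((n + 1) * (n + 1 + 1) * (n + 1 + 2))) ^ 2 =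
      4 * ((x + 1) ^ 2 + (y + 1) ^ 2 + (z + 1) ^ 2) / ((n + 1) * (n + 2) * (n + 3)) ^ 2 := by
    have : (n + 1) * (n + 1 + 1) * (n + 1 + 2) = (n + 1) * (n + 2) * (n + 3) := by ring
    rw [this]
    simp only [div_pow]
    ring
  rw [l1]
  calc _ ≤ 4 * (n + 3) ^ 2 / ((n + 1) * (n + 2) * (n + 3)) ^ 2 := by gcongr
    _ = 4 * (1 / ((n + 1) ^ 2 * (n + 2) ^ 2)) := by field_simp
    _ ≤ _ := by
      have : n + 1 + 1 = n + 2 := by ring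
      rw [this, div_sub_div _ _ (by positivity) (by positivity)]
      refine mul_le_mul_of_nonneg_left ?_ (by norm_num)
      rw [div_le_div_iff₀ (by positivity) (by positivity)]
      have : 0 ≤ (n+1)^2 * (n+2)^2 * ((1 * (n + 2) ^ 3 - (n + 1) ^ 3 * 1) - (n+1)*(n+2)) := by
        apply mul_nonneg (by positivity)
        nlinarith [sq_nonneg n]
      nlinarith

lemma flow_energy (m : ℕ) : ∑ i ∈ range m, ∑ j ∈ range m, ∑ k ∈ range m,
    (flowT (i + 1) j k ^ 2 + flowT (j + 1) i k ^ 2 + flowT (k + 1) i j ^ 2) ≤ 16 := by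
  have s1 : ∀ i j : ℕ, ∑ k ∈ range m,
      (flowT (i + 1) j k ^ 2 + flowT (j + 1) i k ^ 2 + flowT (k + 1) i j ^ 2) ≤
        8 * (1 / (((i + j : ℕ) : ℝ) + 1) ^ 2 - 1 / (((i + (j + 1) : ℕ) : ℝ) + 1) ^ 2) := by
    intro i j
    have h1 := Finset.sum_le_sum (s := range m) fun k _ => flow_sq i j k
    rw [← Finset.mul_sum,
      Finset.sum_range_sub' (fun k => 1 / (((i + j + k : ℕ) : ℝ) + 1) ^ 3)] at h1
    refine h1.trans ?_
    have h2 : 0 ≤ 1 / (((i + j + m : ℕ) : ℝ) + 1) ^ 3 := by positivity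
    have h3 : 1 / (((i + j + 0 : ℕ) : ℝ) + 1) ^ 3 ≤
        2 * (1 / (((i + j : ℕ) : ℝ) + 1) ^ 2 - 1 / (((i + (j + 1) : ℕ) : ℝ) + 1) ^ 2) := by
      have e : (((i + (j + 1) : ℕ) : ℝ)) = ((i + j : ℕ) : ℝ) + 1 := by push_cast; ring
      rw [e, add_zero]
      have hn : (0 : ℝ) ≤ ((i + j : ℕ) : ℝ) := by positivity
      generalize ((i + j : ℕ) : ℝ) = n at *
      rw [div_sub_div _ _ (by positivity) (by positivity), ← mul_div_assoc,
        div_le_div_iff₀ (by positivity) (by positivity)]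
      have : 0 ≤ (n+1)^2 * (2 * (1 * (n + 1 + 1) ^ 2 - (n + 1) ^ 2 * 1) * (n+1) -
          (n + 1 + 1) ^ 2) := by
        apply mul_nonneg (by positivity)
        nlinarith [sq_nonneg n]
      nlinarith
    linarith
  have s2 : ∀ i : ℕ, ∑ j ∈ range m, ∑ k ∈ range m,
      (flowT (i + 1) j k ^ 2 + flowT (j + 1) i k ^ 2 + flowT (k + 1) i j ^ 2) ≤
        16 * (1 / ((i : ℝ) + 1) - 1 / (((i + 1 : ℕ) : ℝ) + 1)) := by
    intro i
    have h1 := Finset.sum_le_sum (s := range m) fun j _ => s1 i j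
    rw [← Finset.mul_sum,
      Finset.sum_range_sub' (fun j => 1 / (((i + j : ℕ) : ℝ) + 1) ^ 2)] at h1
    refine h1.trans ?_
    have h2 : 0 ≤ 1 / (((i + m : ℕ) : ℝ) + 1) ^ 2 := by positivity
    have h3 : 1 / (((i + 0 : ℕ) : ℝ) + 1) ^ 2 ≤
        2 * (1 / ((i : ℝ) + 1) - 1 / (((i + 1 : ℕ) : ℝ) + 1)) := by
      push_cast
      rw [add_zero]
      have hn : (0 : ℝ) ≤ (i : ℝ) := by positivity
      generalize (i : ℝ) = n at *
      rw [div_sub_div _ _ (by positivity) (by positivity), ← mul_div_assoc,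
        div_le_div_iff₀ (by positivity) (by positivity)]
      nlinarith [sq_nonneg n]
    linarith
  have h1 := Finset.sum_le_sum (s := range m) fun i _ => s2 i
  rw [← Finset.mul_sum, Finset.sum_range_sub' (fun i => 1 / ((i : ℝ) + 1))] at h1
  refine h1.trans ?_
  have : (0 : ℝ) ≤ 1 / ((m : ℝ) + 1) := by positivity
  norm_num at this ⊢
  linarith

/-- Transience of `ℤ³`, in variational form. -/
lemma flow_bound (g : ℕ → ℕ → ℕ → ℝ) (m : ℕ) (hm : 0 < m)
    (hg : ∀ i j k, m ≤ i ∨ m ≤ j ∨ m ≤ k → g i j k = 0) :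
    g 0 0 0 ^ 2 ≤ 16 * ∑ i ∈ range m, ∑ j ∈ range m, ∑ k ∈ range m,
      ((g i j k - g (i + 1) j k) ^ 2 + (g i j k - g i (j + 1) k) ^ 2
        + (g i j k - g i j (k + 1)) ^ 2) := by
  have hT0 : ∀ j k, flowT 0 j k = 0 := fun j k => by simp [flowT]
  have key : g 0 0 0 = ∑ i ∈ range m, ∑ j ∈ range m, ∑ k ∈ range m,
      (flowT (i + 1) j k * (g i j k - g (i + 1) j k)
        + flowT (j + 1) i k * (g i j k - g i (j + 1) k)
        + flowT (k + 1) i j * (g i j k - g i j (k + 1))) := by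
    simp only [Finset.sum_add_distrib]
    have a1 : ∑ i ∈ range m, ∑ j ∈ range m, ∑ k ∈ range m,
        flowT (i + 1) j k * (g i j k - g (i + 1) j k) =
        ∑ i ∈ range m, ∑ j ∈ range m, ∑ k ∈ range m,
          (flowT (i + 1) j k - flowT i j k) * g i j k := by
      rw [Finset.sum_comm, Finset.sum_comm (s := range m) (t := range m)
        (f := fun i j => ∑ k ∈ range m, (flowT (i + 1) j k - flowT i j k) * g i j k)]
      refine Finset.sum_congr rfl fun j _ => ?_
      rw [Finset.sum_comm, Finset.sum_comm (s := range m) (t := range m)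
        (f := fun i k => (flowT (i + 1) j k - flowT i j k) * g i j k)]
      refine Finset.sum_congr rfl fun k _ => ?_
      exact sum_parts (fun i => flowT i j k) (fun i => g i j k) m (hT0 _ _) (hg _ _ _ (by simp))
    have a2 : ∑ i ∈ range m, ∑ j ∈ range m, ∑ k ∈ range m,
        flowT (j + 1) i k * (g i j k - g i (j + 1) k) =
        ∑ i ∈ range m, ∑ j ∈ range m, ∑ k ∈ range m,
          (flowT (j + 1) i k - flowT j i k) * g i j k := by
      refine Finset.sum_congr rfl fun i _ => ?_
      rw [Finset.sum_comm, Finset.sum_comm (s := range m) (t := range m)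
        (f := fun j k => (flowT (j + 1) i k - flowT j i k) * g i j k)]
      refine Finset.sum_congr rfl fun k _ => ?_
      exact sum_parts (fun j => flowT j i k) (fun j => g i j k) m (hT0 _ _) (hg _ _ _ (by simp))
    have a3 : ∑ i ∈ range m, ∑ j ∈ range m, ∑ k ∈ range m,
        flowT (k + 1) i j * (g i j k - g i j (k + 1)) =
        ∑ i ∈ range m, ∑ j ∈ range m, ∑ k ∈ range m,
          (flowT (k + 1) i j - flowT k i j) * g i j k := by
      refine Finset.sum_congr rfl fun i _ => Finset.sum_congr rfl fun j _ => ?_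
      exact sum_parts (fun k => flowT k i j) (fun k => g i j k) m (hT0 _ _) (hg _ _ _ (by simp))
    rw [a1, a2, a3]
    simp only [← Finset.sum_add_distrib, ← add_mul]
    simp only [flow_div]
    rw [Finset.sum_eq_single 0, Finset.sum_eq_single 0, Finset.sum_eq_single 0]
    · simp
    · intro b _ hb; simp [hb]
    · simp [hm.ne']
    · intro b _ hb; simp [hb]
    · simp [hm.ne']
    · intro b _ hb; simp [hb]
    · simp [hm.ne']
  let R := (range m ×ˢ range m ×ˢ range m) ×ˢ (Finset.univ : Finset (Fin 3))
  let F : (ℕ × ℕ × ℕ) × Fin 3 → ℝ := fun r =>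
    ![flowT (r.1.1 + 1) r.1.2.1 r.1.2.2, flowT (r.1.2.1 + 1) r.1.1 r.1.2.2,
      flowT (r.1.2.2 + 1) r.1.1 r.1.2.1] r.2
  let G : (ℕ × ℕ × ℕ) × Fin 3 → ℝ := fun r =>
    ![g r.1.1 r.1.2.1 r.1.2.2 - g (r.1.1 + 1) r.1.2.1 r.1.2.2,
      g r.1.1 r.1.2.1 r.1.2.2 - g r.1.1 (r.1.2.1 + 1) r.1.2.2,
      g r.1.1 r.1.2.1 r.1.2.2 - g r.1.1 r.1.2.1 (r.1.2.2 + 1)] r.2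
  have hCS := Finset.sum_mul_sq_le_sq_mul_sq R F G
  have c1 : ∑ r ∈ R, F r * G r = g 0 0 0 := by
    rw [key]; simp [R, F, G, Finset.sum_product, Fin.sum_univ_three]
  have c2 : ∑ r ∈ R, F r ^ 2 = ∑ i ∈ range m, ∑ j ∈ range m, ∑ k ∈ range m,
    (flowT (i + 1) j k ^ 2 + flowT (j + 1) i k ^ 2 + flowT (k + 1) i j ^ 2) := by
    simp [R, F, Finset.sum_product, Fin.sum_univ_three]
  have c3 : ∑ r ∈ R, G r ^ 2 = ∑ i ∈ range m, ∑ j ∈ range m, ∑ k ∈ range m,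
      ((g i j k - g (i + 1) j k) ^ 2 + (g i j k - g i (j + 1) k) ^ 2
        + (g i j k - g i j (k + 1)) ^ 2) := by
    simp [R, G, Finset.sum_product, Fin.sum_univ_three]
  rw [c1, c2] at hCS
  rw [← c3]
  refine hCS.trans ?_
  have : 0 ≤ ∑ r ∈ R, G r ^ 2 := Finset.sum_nonneg fun _ _ => sq_nonneg _
  exact mul_le_mul_of_nonneg_right (flow_energy m) this

end Flow

section GFFMatrix

variable {d : ℕ}

lemma nbrs_symm_imp {x y : Fin d → ℤ} (h : y ∈ nbrs d x) : x ∈ nbrs d y := by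
  unfold nbrs at *
  simp only [Finset.mem_image, Finset.mem_univ, true_and, Prod.exists] at *
  obtain ⟨l, s, rfl⟩ := h
  refine ⟨l, !s, ?_⟩
  cases s <;> simp

lemma nbrs_symm (x y : Fin d → ℤ) : y ∈ nbrs d x ↔ x ∈ nbrs d y :=
  ⟨nbrs_symm_imp, nbrs_symm_imp⟩

lemma nbrs_card_le (x : Fin d → ℤ) : (nbrs d x).card ≤ 2 * d := by
  refine Finset.card_image_le.trans ?_
  simp [mul_comm]

lemma step_mem_nbrs (x : Fin d → ℤ) (l : Fin d) : Function.update x l (x l + 1) ∈ nbrs d x := by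
  unfold nbrs
  simp only [Finset.mem_image, Finset.mem_univ, true_and, Prod.exists]
  exact ⟨l, true, by simp⟩

lemma nbrs_subset (S : Finset (Fin d → ℤ)) {x y : Fin d → ℤ} (hx : x ∈ S) (hy : y ∈ nbrs d x) :
    y ∈ S ∪ bdry d S := by
  unfold bdry
  rw [Finset.mem_union, Finset.mem_sdiff, Finset.mem_biUnion]
  by_cases h : y ∈ S
  · exact Or.inl h
  · exact Or.inr ⟨⟨x, hx, hy⟩, h⟩

/-- Matrix of the GFF Hamiltonian. -/
noncomputable def gffM (d : ℕ) (x y : Fin d → ℤ) : ℝ :=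
  ((if x = y then ((nbrs d x).card : ℝ) else 0) - (if y ∈ nbrs d x then 1 else 0)) / (4 * d)

lemma ham_eq_QF (S : Finset (Fin d → ℤ)) (φ : (Fin d → ℤ) → ℝ)
    (hφ : ∀ x, x ∉ S → φ x = 0) : ham d S φ = QF (gffM d) S φ := by
  unfold ham
  set T := S ∪ bdry d S with hT
  have hST : S ⊆ T := Finset.subset_union_left
  have h1 : ∑ x ∈ T, ∑ y ∈ T, (if y ∈ nbrs d x then (φ x - φ y) ^ 2 else 0) =
      (∑ x ∈ T, ∑ y ∈ T, (if y ∈ nbrs d x then φ x ^ 2 else 0)) +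
      (∑ x ∈ T, ∑ y ∈ T, (if y ∈ nbrs d x then φ y ^ 2 else 0)) -
      2 * ∑ x ∈ T, ∑ y ∈ T, (if y ∈ nbrs d x then φ x * φ y else 0) := by
    rw [Finset.mul_sum, ← Finset.sum_add_distrib, ← Finset.sum_sub_distrib]
    refine Finset.sum_congr rfl fun x _ => ?_
    rw [Finset.mul_sum, ← Finset.sum_add_distrib, ← Finset.sum_sub_distrib]
    refine Finset.sum_congr rfl fun y _ => ?_
    split_ifs <;> ring
  have h2 : (∑ x ∈ T, ∑ y ∈ T, (if y ∈ nbrs d x then φ y ^ 2 else 0)) =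
      ∑ x ∈ T, ∑ y ∈ T, (if y ∈ nbrs d x then φ x ^ 2 else 0) := by
    rw [Finset.sum_comm]
    refine Finset.sum_congr rfl fun x _ => Finset.sum_congr rfl fun y _ => ?_
    simp only [nbrs_symm x y]
  have h3 : (∑ x ∈ T, ∑ y ∈ T, (if y ∈ nbrs d x then φ x ^ 2 else 0)) =
      ∑ x ∈ S, ((nbrs d x).card : ℝ) * φ x ^ 2 := by
    rw [← Finset.sum_subset hST]
    · refine Finset.sum_congr rfl fun x hx => ?_
      rw [← Finset.sum_filter, Finset.sum_const, nsmul_eq_mul]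
      congr 3
      ext y
      simp only [Finset.mem_filter, and_iff_right_iff_imp]
      exact nbrs_subset S hx
    · intro x _ hx
      simp [hφ x hx]
  have h4 : (∑ x ∈ T, ∑ y ∈ T, (if y ∈ nbrs d x then φ x * φ y else 0)) =
      ∑ x ∈ S, ∑ y ∈ S, (if y ∈ nbrs d x then φ x * φ y else 0) := by
    rw [← Finset.sum_subset hST]
    · refine Finset.sum_congr rfl fun x hx => ?_
      rw [← Finset.sum_subset hST]
      intro y _ hy; simp [hφ y hy]
    · intro x _ hx
      simp [hφ x hx]
  have h5 : QF (gffM d) S φ = (∑ x ∈ S, ((nbrs d x).card : ℝ) * φ x ^ 2 -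
      ∑ x ∈ S, ∑ y ∈ S, (if y ∈ nbrs d x then φ x * φ y else 0)) / (4 * d) := by
    unfold QF gffM
    rw [← Finset.sum_sub_distrib, Finset.sum_div]
    refine Finset.sum_congr rfl fun x hx => ?_
    have : ((nbrs d x).card : ℝ) * φ x ^ 2 =
        ∑ y ∈ S, if x = y then ((nbrs d x).card : ℝ) * φ x * φ y else 0 := by
      rw [Finset.sum_ite_eq]; simp [hx]; ring
    rw [this, ← Finset.sum_sub_distrib, Finset.sum_div]
    refine Finset.sum_congr rfl fun y hy => ?_
    split_ifs <;> ring
  rw [h1, h2, h3, h4, h5]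
  ring

/-- Points of the three-dimensional positive octant based at `x`. -/
def octPt (x : Fin d → ℤ) (i j k : ℕ) : Fin d → ℤ := fun l =>
  x l + if l.val = 0 then (i : ℤ) else if l.val = 1 then (j : ℤ) else
    if l.val = 2 then (k : ℤ) else 0

lemma oct_energy (S : Finset (Fin d → ℤ)) (f : (Fin d → ℤ) → ℝ)
    (hf : ∀ x, x ∉ S → f x = 0) (P : Finset (ℕ × ℕ × ℕ)) (e : ℕ × ℕ × ℕ → (Fin d → ℤ))
    (he : Function.Injective e) (l : Fin d) :
    ∑ p ∈ P, (f (e p) - f (Function.update (e p) l (e p l + 1))) ^ 2 ≤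
      ∑ x ∈ S ∪ bdry d S, ∑ y ∈ S ∪ bdry d S,
        if y ∈ nbrs d x then (f x - f y) ^ 2 else 0 := by
  set T := S ∪ bdry d S with hT
  have hnn : ∀ x : Fin d → ℤ, 0 ≤ ∑ y ∈ T, if y ∈ nbrs d x then (f x - f y) ^ 2 else 0 :=
    fun x => Finset.sum_nonneg fun y _ => by split_ifs <;> positivity
  have hpt : ∀ u : Fin d → ℤ, (f u - f (Function.update u l (u l + 1))) ^ 2 ≤
      if u ∈ T then ∑ y ∈ T, (if y ∈ nbrs d u then (f u - f y) ^ 2 else 0) else 0 := by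
    intro u
    set v := Function.update u l (u l + 1) with hv
    have huv : v ∈ nbrs d u := step_mem_nbrs u l
    by_cases h : u ∈ S ∨ v ∈ S
    · have hu : u ∈ T := by
        rcases h with h | h
        · exact Finset.mem_union_left _ h
        · exact nbrs_subset S h (nbrs_symm_imp huv)
      have hvT : v ∈ T := by
        rcases h with h | h
        · exact nbrs_subset S h huv
        · exact Finset.mem_union_left _ h
      rw [if_pos hu]
      have := Finset.single_le_sum (s := T)
        (f := fun y => if y ∈ nbrs d u then (f u - f y) ^ 2 else 0)
        (fun y _ => by split_ifs <;> positivity) hvT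
      simpa [huv] using this
    · push Not at h
      have h0 := hnn u
      rw [hf u h.1] at *
      rw [hf v h.2]
      split_ifs
      · simpa using h0
      · simp
  calc _ ≤ ∑ p ∈ P, (if e p ∈ T then
          ∑ y ∈ T, (if y ∈ nbrs d (e p) then (f (e p) - f y) ^ 2 else 0) else 0) :=
        Finset.sum_le_sum fun p _ => hpt (e p)
    _ = ∑ u ∈ P.image e, (if u ∈ T then
          ∑ y ∈ T, (if y ∈ nbrs d u then (f u - f y) ^ 2 else 0) else 0) := by
        rw [Finset.sum_image fun a _ b _ h => he h]
    _ = ∑ u ∈ (P.image e).filter (· ∈ T),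
          ∑ y ∈ T, (if y ∈ nbrs d u then (f u - f y) ^ 2 else 0) := by
        rw [Finset.sum_filter]
    _ ≤ _ := by
        apply Finset.sum_le_sum_of_subset_of_nonneg
        · intro u hu; exact (Finset.mem_filter.1 hu).2
        · intro u _ _; exact hnn u

lemma ham_bound (hd : 3 ≤ d) (S : Finset (Fin d → ℤ)) (f : (Fin d → ℤ) → ℝ)
    (hf : ∀ x, x ∉ S → f x = 0) (x : Fin d → ℤ) : f x ^ 2 ≤ 384 * d * ham d S f := by
  let l0 : Fin d := ⟨0, by omega⟩
  let l1 : Fin d := ⟨1, by omega⟩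
  let l2 : Fin d := ⟨2, by omega⟩
  let e : ℕ × ℕ × ℕ → (Fin d → ℤ) := fun p => octPt x p.1 p.2.1 p.2.2
  have he : Function.Injective e := by
    rintro ⟨i, j, k⟩ ⟨i', j', k'⟩ h
    have h0 := congrFun h l0
    have h1 := congrFun h l1
    have h2 := congrFun h l2
    simp [e, octPt, l0, l1, l2] at h0 h1 h2
    simp [h0, h1, h2]
  let m := (S.sup fun y => max (y l0 - x l0).toNat (max (y l1 - x l1).toNat
    (y l2 - x l2).toNat)) + 1
  let g : ℕ → ℕ → ℕ → ℝ := fun i j k => f (octPt x i j k)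
  have hg : ∀ i j k, m ≤ i ∨ m ≤ j ∨ m ≤ k → g i j k = 0 := by
    intro i j k h
    apply hf
    intro hmem
    have := Finset.le_sup (f := fun y : Fin d → ℤ =>
      max (y l0 - x l0).toNat (max (y l1 - x l1).toNat (y l2 - x l2).toNat)) hmem
    simp [octPt, l0, l1, l2] at this
    simp only [m, l0, l1, l2] at h
    omega
  have hb := flow_bound g m (Nat.succ_pos _) hg
  have hx : g 0 0 0 = f x := by
    simp only [g]; congr 1; funext l; simp [octPt]
  have s0 : ∀ i j k, octPt x (i + 1) j k =
      Function.update (octPt x i j k) l0 (octPt x i j k l0 + 1) := by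
    intro i j k; funext l
    by_cases h : l = l0
    · subst h; simp [octPt, l0]; ring
    · rw [Function.update_of_ne h]
      have : l.val ≠ 0 := fun h' => h (Fin.ext h')
      simp [octPt, this]
  have s1 : ∀ i j k, octPt x i (j + 1) k =
      Function.update (octPt x i j k) l1 (octPt x i j k l1 + 1) := by
    intro i j k; funext l
    by_cases h : l = l1
    · subst h; simp [octPt, l1]; ring
    · rw [Function.update_of_ne h]
      have : l.val ≠ 1 := fun h' => h (Fin.ext h')
      simp [octPt, this]
  have s2 : ∀ i j k, octPt x i j (k + 1) =
      Function.update (octPt x i j k) l2 (octPt x i j k l2 + 1) := by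
    intro i j k; funext l
    by_cases h : l = l2
    · subst h; simp [octPt, l2]; ring
    · rw [Function.update_of_ne h]
      have : l.val ≠ 2 := fun h' => h (Fin.ext h')
      simp [octPt, this]
  let P := range m ×ˢ range m ×ˢ range m
  have E0 := oct_energy S f hf P e he l0
  have E1 := oct_energy S f hf P e he l1
  have E2 := oct_energy S f hf P e he l2
  simp only [P, e, Finset.sum_product, ← s0, ← s1, ← s2] at E0 E1 E2
  rw [hx] at hb
  simp only [Finset.sum_add_distrib, g] at hb
  have hd0 : (0 : ℝ) < d := by
    have : 0 < d := by omega
    exact_mod_cast this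
  have hham : 384 * d * ham d S f = 48 * ∑ x ∈ S ∪ bdry d S, ∑ y ∈ S ∪ bdry d S,
        if y ∈ nbrs d x then (f x - f y) ^ 2 else 0 := by
    unfold ham
    field_simp
    ring
  rw [hham]
  linarith

lemma gffM_good (hd : 3 ≤ d) (S : Finset (Fin d → ℤ)) : GoodM (384 * d) S (gffM d) := by
  have hd0 : (0 : ℝ) < d := by
    have : 0 < d := by omega
    exact_mod_cast this
  refine ⟨?_, ?_, ?_, ?_, ?_⟩
  · intro x y
    unfold gffM
    simp only [nbrs_symm y x]
    by_cases h : x = y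
    · subst h; rfl
    · simp [h, Ne.symm h]
  · intro x _ y _ hxy
    unfold gffM
    rw [if_neg hxy]
    apply div_nonpos_of_nonpos_of_nonneg _ (by positivity)
    split_ifs <;> norm_num
  · intro x hx
    unfold gffM
    rw [← Finset.sum_div]
    apply div_nonneg _ (by positivity)
    rw [Finset.sum_sub_distrib, Finset.sum_ite_eq, if_pos hx, sub_nonneg, ← Finset.sum_filter,
      Finset.sum_const, nsmul_eq_mul, mul_one]
    exact_mod_cast Finset.card_le_card fun y hy => (Finset.mem_filter.1 hy).2
  · intro x _
    unfold gffM
    rw [if_pos rfl, div_le_iff₀ (by positivity)]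
    have h1 : ((nbrs d x).card : ℝ) ≤ 2 * d := by exact_mod_cast nbrs_card_le x
    split_ifs <;> linarith
  · intro φ x hx
    have h := ham_bound hd S (fun y => if y ∈ S then φ y else 0) (fun y hy => by simp [hy]) x
    rw [ham_eq_QF S _ (fun y hy => by simp [hy]),
      QF_congr _ S (φ := fun y => if y ∈ S then φ y else 0) (ψ := φ)
        (fun y hy => by simp [hy])] at h
    simpa [hx] using h

end GFFMatrix

section Final

variable {d : ℕ}

lemma extz_eq (S : Finset (Fin d → ℤ)) (ψ : S → ℝ) :
    extz S ψ = Function.updateFinset (fun _ => (0 : ℝ)) S ψ := by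
  funext x; simp [extz, Function.updateFinset]

lemma LM_zero (S : Finset (Fin d → ℤ)) (f : ((Fin d → ℤ) → ℝ) → ENNReal) :
    LM S f (fun _ => 0) = ∫⁻ ψ : S → ℝ, f (extz S ψ) := by
  unfold LM lmarginal
  simp_rw [extz_eq]
  rfl

lemma measurable_extz (S : Finset (Fin d → ℤ)) :
    Measurable (fun ψ : S → ℝ => extz S ψ) := by
  simp_rw [extz_eq]
  exact measurable_updateFinset

lemma gffDensity_eq (S : Finset (Fin d → ℤ)) (ψ : S → ℝ) :
    gffDensity d S ψ = Real.exp (-QF (gffM d) S (extz S ψ)) := by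
  unfold gffDensity
  rw [ham_eq_QF S _ fun x hx => by simp [extz, hx]]

lemma measurable_gffDensity (S : Finset (Fin d → ℤ)) : Measurable (gffDensity d S) := by
  have : gffDensity d S = fun ψ => Real.exp (-QF (gffM d) S (extz S ψ)) :=
    funext (gffDensity_eq S)
  rw [this]
  exact Real.measurable_exp.comp ((measurable_QF _ _).comp (measurable_extz S)).neg

lemma ofReal_gffZ (hd : 3 ≤ d) (S : Finset (Fin d → ℤ)) :
    ENNReal.ofReal (gffZ d S) = LM S (EW (gffM d) S) (fun _ => 0) := by
  have hK : (0 : ℝ) < 384 * d := by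
    have : 0 < d := by omega
    have : (0 : ℝ) < d := by exact_mod_cast this
    positivity
  have hfin := (LM_EW_pos_fin hK S _ (gffM_good hd S) (fun _ => 0)).2
  have e : LM S (EW (gffM d) S) (fun _ => 0) =
      ∫⁻ ψ : S → ℝ, ENNReal.ofReal (gffDensity d S ψ) := by
    rw [LM_zero]
    simp_rw [gffDensity_eq]
    rfl
  rw [e] at hfin ⊢
  unfold gffZ
  rw [integral_eq_lintegral_of_nonneg_ae (f := gffDensity d S)
    (Filter.Eventually.of_forall fun _ => (Real.exp_pos _).le)
    (measurable_gffDensity S).aestronglyMeasurable, ENNReal.ofReal_toReal hfin]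

lemma extz_mem_wallSet (S : Finset (Fin d → ℤ)) (ψ : S → ℝ) :
    extz S ψ ∈ wallSet S ↔ ψ ∈ wall S := by
  unfold wallSet wall
  simp only [Set.mem_ofPred_eq]
  constructor
  · rintro h ⟨x, hx⟩
    simpa [extz, hx] using h x hx
  · intro h x hx
    simpa [extz, hx] using h ⟨x, hx⟩

lemma measurableSet_wall (S : Finset (Fin d → ℤ)) : MeasurableSet (wall S) := by
  have : wall S = (fun ψ : S → ℝ => extz S ψ) ⁻¹' wallSet S := by
    ext ψ; exact (extz_mem_wallSet S ψ).symm
  rw [this]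
  exact measurable_extz S (measurableSet_wallSet S)

lemma gff_wall (hd : 3 ≤ d) (S : Finset (Fin d → ℤ)) :
    gff d S (wall S) = (LM S (EW (gffM d) S) (fun _ => 0))⁻¹ *
      LM S ((wallSet S).indicator (EW (gffM d) S)) (fun _ => 0) := by
  unfold gff
  rw [Measure.smul_apply, ofReal_gffZ hd, smul_eq_mul,
    withDensity_apply _ (measurableSet_wall S), LM_zero S ((wallSet S).indicator _),
    ← lintegral_indicator (measurableSet_wall S)]
  congr 2
  funext ψ
  by_cases h : ψ ∈ wall S
  · rw [Set.indicator_of_mem h, Set.indicator_of_mem ((extz_mem_wallSet S ψ).2 h), gffDensity_eq]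
    rfl
  · rw [Set.indicator_of_notMem h,
      Set.indicator_of_notMem (fun h' => h ((extz_mem_wallSet S ψ).1 h'))]

lemma wallOn_eq (N : ℕ) : wallOn d N (box d N) = wall (box d N) := by
  ext ψ
  simp [wallOn, wall]

lemma pinDensity_expand (N : ℕ) (a b : ℝ) (ψ : box d N → ℝ) :
    pinDensity d N a b ψ = ∑ A ∈ (box d N).powerset, (Real.exp b - 1) ^ A.card *
      ((boxSet a A).indicator (fun φ => Real.exp (-QF (gffM d) (box d N) φ))
        (extz (box d N) ψ)) := by
  classical
  have h1 : pinDensity d N a b ψ = gffDensity d (box d N) ψ *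
      ∏ x ∈ box d N, (1 + (Real.exp b - 1) *
        (if extz (box d N) ψ x ∈ Set.Icc 0 a then (1 : ℝ) else 0)) := by
    unfold pinDensity gffDensity
    rw [Real.exp_add]
    congr 1
    rw [Finset.mul_sum, Real.exp_sum, ← Finset.prod_coe_sort (box d N) (fun x => 1 + (Real.exp b - 1) *
        (if extz (box d N) ψ x ∈ Set.Icc 0 a then (1 : ℝ) else 0))]
    refine Finset.prod_congr rfl fun x _ => ?_
    have : extz (box d N) ψ x = ψ x := by simp [extz]
    rw [this]
    split_ifs <;> simp
  rw [h1, Finset.prod_one_add, gffDensity_eq, Finset.mul_sum]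
  refine Finset.sum_congr rfl fun A _ => ?_
  rw [Finset.prod_mul_distrib, Finset.prod_const]
  by_cases h : extz (box d N) ψ ∈ boxSet a A
  · rw [Set.indicator_of_mem h, Finset.prod_eq_one fun x hx => if_pos (h x hx)]
    ring
  · rw [Set.indicator_of_notMem h]
    have : ∃ x ∈ A, extz (box d N) ψ x ∉ Set.Icc 0 a := by
      simpa [boxSet] using h
    obtain ⟨x, hx, hxa⟩ := this
    rw [Finset.prod_eq_zero hx (if_neg hxa)]
    ring

lemma pin_integral (N : ℕ) (a b : ℝ) (hb : 0 < b) :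
    ∑ A ∈ (box d N).powerset, ENNReal.ofReal (Real.exp b - 1) ^ A.card *
      LM (box d N) ((wallSet (box d N \ A) ∩ boxSet a A).indicator
        (EW (gffM d) (box d N))) (fun _ => 0) ≤
    ∫⁻ ψ in wall (box d N), ENNReal.ofReal (pinDensity d N a b ψ) := by
  have hb1 : 0 ≤ Real.exp b - 1 := by linarith [Real.add_one_le_exp b]
  have hmeas : ∀ A : Finset (Fin d → ℤ), Measurable fun ψ : box d N → ℝ =>
      (wallSet (box d N \ A) ∩ boxSet a A).indicator (EW (gffM d) (box d N))
        (extz (box d N) ψ) := fun A =>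
    ((measurable_EW _ _).indicator
      ((measurableSet_wallSet _).inter (measurableSet_boxSet a A))).comp (measurable_extz _)
  rw [← lintegral_indicator (measurableSet_wall _)]
  simp_rw [LM_zero]
  have : ∀ A ∈ (box d N).powerset, ENNReal.ofReal (Real.exp b - 1) ^ A.card *
      ∫⁻ ψ : box d N → ℝ, (wallSet (box d N \ A) ∩ boxSet a A).indicator
        (EW (gffM d) (box d N)) (extz (box d N) ψ) =
      ∫⁻ ψ : box d N → ℝ, ENNReal.ofReal (Real.exp b - 1) ^ A.card *
        (wallSet (box d N \ A) ∩ boxSet a A).indicator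
        (EW (gffM d) (box d N)) (extz (box d N) ψ) := fun A _ =>
    (lintegral_const_mul _ (hmeas A)).symm
  rw [Finset.sum_congr rfl this,
    ← lintegral_finsetSum _ fun A _ => (hmeas A).const_mul _]
  apply lintegral_mono
  intro ψ
  simp only
  by_cases h : ψ ∈ wall (box d N)
  · rw [Set.indicator_of_mem h, pinDensity_expand, ENNReal.ofReal_sum_of_nonneg]
    · refine Finset.sum_le_sum fun A _ => ?_
      rw [ENNReal.ofReal_mul (by positivity), ENNReal.ofReal_pow hb1]
      gcongr
      by_cases h2 : extz (box d N) ψ ∈ boxSet a A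
      · rw [Set.indicator_of_mem h2]
        exact Set.indicator_le_self _ _ _
      · rw [Set.indicator_of_notMem (fun h3 => h2 h3.2)]
        exact zero_le
    · intro A _
      refine mul_nonneg (by positivity) (Set.indicator_nonneg (fun _ _ => (Real.exp_pos _).le) _)
  · rw [Set.indicator_of_notMem h]
    refine (Finset.sum_eq_zero fun A _ => ?_).le
    rw [Set.indicator_of_notMem, mul_zero]
    rintro ⟨h1, h2⟩
    apply h
    rw [← extz_mem_wallSet]
    intro x hx
    by_cases hxA : x ∈ A
    · exact (h2 x hxA).1
    · exact h1 x (Finset.mem_sdiff.2 ⟨hx, hxA⟩)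

end Final

/-- Lower bound for the hard-wall probability under the square-well pinning
measure: `P̃_{N,a,b}(Ω_N⁺) ≥ (Z_N/Z̃_{N,a,b}) ∑_{A ⊆ Λ_N} e^{J'|A|} P_{A^c}(Ω⁺_{A^c})`
with `J' = log(e^b - 1) + log c + log (min (1/2) a)`. -/
theorem pinned_wall_probability_lower_bound (d : ℕ) (hd : 3 ≤ d) :
    ∃ c : ℝ, 0 < c ∧ ∀ N : ℕ, ∀ a b : ℝ, 0 < a → 0 < b →
      pin d N a b (wallOn d N (box d N)) ≥
        ENNReal.ofReal ((gffZ d (box d N) / pinZ d N a b) *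
          ∑ A ∈ (box d N).powerset,
            Real.exp ((Real.log (Real.exp b - 1) + Real.log c +
                Real.log (min (1 / 2) a)) * A.card) *
              (gff d (box d N \ A) (wall (box d N \ A))).toReal) := by
  have hd0 : (0 : ℝ) < d := by
    have : 0 < d := by omega
    exact_mod_cast this
  have hK : (0 : ℝ) < 384 * d := by positivity
  refine ⟨ssc (384 * d), ssc_pos hK, fun N a b ha hb => ?_⟩
  have hc := ssc_pos hK
  have hm : 0 < min (1 / 2) a := lt_min (by norm_num) ha
  have hb1 : 0 < Real.exp b - 1 := by linarith [Real.add_one_lt_exp hb.ne']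
  have hZp : 0 ≤ pinZ d N a b := integral_nonneg fun _ => (Real.exp_pos _).le
  rcases hZp.eq_or_lt with h0 | hZ
  · rw [← h0]; simp
  have hexp : ∀ n : ℕ, Real.exp ((Real.log (Real.exp b - 1) + Real.log (ssc (384 * d)) +
      Real.log (min (1 / 2) a)) * n) =
      (Real.exp b - 1) ^ n * (ssc (384 * d) * min (1 / 2) a) ^ n := by
    intro n
    rw [mul_comm, Real.exp_nat_mul, Real.exp_add, Real.exp_add, Real.exp_log hb1,
      Real.exp_log hc, Real.exp_log hm, ← mul_pow, mul_assoc]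
  simp_rw [hexp]
  rw [ge_iff_le, wallOn_eq]
  unfold pin
  rw [Measure.smul_apply, smul_eq_mul, withDensity_apply _ (measurableSet_wall _)]
  have hgZ : 0 ≤ gffZ d (box d N) := integral_nonneg fun _ => (Real.exp_pos _).le
  rw [ENNReal.ofReal_mul (div_nonneg hgZ hZp), ENNReal.ofReal_div_of_pos hZ, div_eq_mul_inv,
    mul_comm (ENNReal.ofReal (gffZ d (box d N))), mul_assoc]
  gcongr
  refine le_trans ?_ (pin_integral N a b hb)
  rw [ENNReal.ofReal_sum_of_nonneg (fun A _ => by positivity), Finset.mul_sum]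
  refine Finset.sum_le_sum fun A hA => ?_
  have hA' : A ⊆ box d N := Finset.mem_powerset.1 hA
  have hU : A ∪ (box d N \ A) = box d N := Finset.union_sdiff_of_subset hA'
  have key := main_set hK ha A (box d N \ A) Finset.disjoint_sdiff (gffM d)
    (gffM_good hd _) (fun _ => 0)
  rw [hU] at key
  obtain ⟨hz0, hzt⟩ := LM_EW_pos_fin hK (box d N \ A) _ (gffM_good hd _) (fun _ => 0)
  rw [ENNReal.ofReal_mul (by positivity), ENNReal.ofReal_mul (by positivity),
    ENNReal.ofReal_pow hb1.le, ENNReal.ofReal_pow (by positivity), ofReal_gffZ hd]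
  refine (mul_le_mul_right (mul_le_mul_right ENNReal.ofReal_toReal_le _) _).trans ?_
  rw [gff_wall hd]
  set Z := LM (box d N \ A) (EW (gffM d) (box d N \ A)) (fun _ => 0)
  set ZL := LM (box d N) (EW (gffM d) (box d N)) (fun _ => 0)
  set W := LM (box d N \ A) ((wallSet (box d N \ A)).indicator
    (EW (gffM d) (box d N \ A))) (fun _ => 0)
  set β := ENNReal.ofReal (Real.exp b - 1)
  set γ := ENNReal.ofReal (ssc (384 * d) * min (1 / 2) a)
  calc ZL * (β ^ A.card * γ ^ A.card * (Z⁻¹ * W))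
      = β ^ A.card * ((γ ^ A.card * W * ZL) * Z⁻¹) := by ring
    _ ≤ β ^ A.card * ((_ * Z) * Z⁻¹) := mul_le_mul_right (mul_le_mul_left key _) _
    _ = _ := by rw [mul_assoc _ Z, ENNReal.mul_inv_cancel hz0 hzt, mul_one]
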